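/- arXiv:2404.01610 — 4 statements merged into one kernel-verified Lean document; each statement's English description precedes it below -/
import Mathlib

section
/- (Moser–Trudinger inequality) For every β > 0 there exists a constant C > 0, depending only on β and (V, μ, W), such that every v : V → ℝ with ∫_V v dμ = 0 and ∫_V |∇v|² dμ ≤ 1 satisfies ∫_V e^{β v²} dμ ≤ C. -/
open Real Finset

variable {V : Type*}

/-- Discrete integral: `∫_V f dμ = Σ_x μ(x) f(x)`. -/
noncomputable def intV [Fintype V] (μ f : V → ℝ) : ℝ := ∑ x, μ x * f x

/-- Volume `|V| = Σ_x μ(x)`. -/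
noncomputable def volV [Fintype V] (μ : V → ℝ) : ℝ := ∑ x, μ x

/-- The nonlocal (fractional graph Laplacian type) operator
`Lu(x) = (1/μ(x)) Σ_{y ≠ x} W(x,y)(u(x) − u(y))`. -/
noncomputable def opL [Fintype V] [DecidableEq V] (μ : V → ℝ) (W : V → V → ℝ)
    (u : V → ℝ) (x : V) : ℝ :=
  (1 / μ x) * ∑ y ∈ univ.filter (fun y => y ≠ x), W x y * (u x - u y)

/-- Gradient form `∇u·∇v(x) = (1/(2μ(x))) Σ_{y ≠ x} W(x,y)(u(x)−u(y))(v(x)−v(y))`. -/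
noncomputable def gradForm [Fintype V] [DecidableEq V] (μ : V → ℝ) (W : V → V → ℝ)
    (u v : V → ℝ) (x : V) : ℝ :=
  (1 / (2 * μ x)) * ∑ y ∈ univ.filter (fun y => y ≠ x), W x y * (u x - u y) * (v x - v y)

/-- `|∇u|²(x) = ∇u·∇u(x)`. -/
noncomputable def gradSq [Fintype V] [DecidableEq V] (μ : V → ℝ) (W : V → V → ℝ)
    (u : V → ℝ) (x : V) : ℝ := gradForm μ W u u x

/-!
Every edge of a weighted graph bounds the difference of `v` at its endpoints by a multiple of the
square root of the Dirichlet energy `∫_V |∇v|² dμ`. Adding these bounds along walks controls the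
oscillation of `v` on a connected graph, and a function of mean zero is bounded pointwise by its
oscillation. Hence unit energy gives a uniform pointwise bound, and the exponential integral is at
most the volume times a constant.
-/

/-- The underlying graph of a weight: distinct points `x`, `y` are adjacent when `W x y` or `W y x`
is positive. These are the pairs whose differences are seen by the energy `∫_V |∇u|² dμ`, and taking
both orders makes the graph undirected for any `W`. -/
def weightGraph (W : V → V → ℝ) : SimpleGraph V :=
  SimpleGraph.fromRel fun x y => 0 < W x y

section Integral

variable [Fintype V] {μ : V → ℝ}

theorem intV_mono {f g : V → ℝ} (hμ : ∀ x, 0 ≤ μ x) (hfg : ∀ x, f x ≤ g x) :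
    intV μ f ≤ intV μ g :=
  sum_le_sum fun x _ => mul_le_mul_of_nonneg_left (hfg x) (hμ x)

theorem intV_const (c : ℝ) : intV μ (fun _ => c) = volV μ * c :=
  (sum_mul univ μ c).symm

theorem intV_const_sub (f : V → ℝ) (c : ℝ) :
    intV μ (fun x => c - f x) = volV μ * c - intV μ f := by
  simp only [intV, volV, mul_sub, sum_sub_distrib, sum_mul]

theorem abs_intV_le (hμ : ∀ x, 0 ≤ μ x) (f : V → ℝ) :
    |intV μ f| ≤ intV μ (fun x => |f x|) := by
  refine (abs_sum_le_sum_abs _ _).trans_eq (sum_congr rfl fun x _ => ?_)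
  rw [abs_mul, abs_of_nonneg (hμ x)]

theorem volV_pos [Nonempty V] (hμ : ∀ x, 0 < μ x) : 0 < volV μ :=
  sum_pos (fun x _ => hμ x) univ_nonempty

theorem abs_le_of_intV_eq_zero {v : V → ℝ} {x : V} {K : ℝ} (hμ : ∀ x, 0 ≤ μ x)
    (hvol : 0 < volV μ) (hv : intV μ v = 0) (hK : ∀ y, |v x - v y| ≤ K) : |v x| ≤ K := by
  refine le_of_mul_le_mul_left ?_ hvol
  calc volV μ * |v x| = |intV μ (fun y => v x - v y)| := by
        rw [intV_const_sub, hv, sub_zero, abs_mul, abs_of_pos hvol]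
    _ ≤ intV μ (fun y => |v x - v y|) := abs_intV_le hμ _
    _ ≤ intV μ (fun _ => K) := intV_mono hμ hK
    _ = volV μ * K := intV_const K

end Integral

section Energy

variable [Fintype V] [DecidableEq V] {μ : V → ℝ} {W : V → V → ℝ}

theorem intV_gradSq (hμ : ∀ x, μ x ≠ 0) (v : V → ℝ) :
    intV μ (gradSq μ W v) = (1 / 2) * ∑ x, ∑ y with y ≠ x, W x y * (v x - v y) ^ 2 := by
  rw [intV, mul_sum]
  refine sum_congr rfl fun x _ => ?_
  have hμx := hμ x
  simp only [gradSq, gradForm, mul_assoc, ← sq]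
  field_simp

theorem mul_sq_sub_le_two_mul_intV_gradSq (hμ : ∀ x, μ x ≠ 0)
    (hW : ∀ x y, x ≠ y → 0 ≤ W x y) (v : V → ℝ) {x y : V} (hxy : x ≠ y) :
    W x y * (v x - v y) ^ 2 ≤ 2 * intV μ (gradSq μ W v) := by
  have term_nonneg : ∀ a, ∀ b ∈ univ.filter (· ≠ a), 0 ≤ W a b * (v a - v b) ^ 2 :=
    fun a b hb => mul_nonneg (hW a b (mem_filter.1 hb).2.symm) (sq_nonneg _)
  calc W x y * (v x - v y) ^ 2
      ≤ ∑ b with b ≠ x, W x b * (v x - v b) ^ 2 :=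
        single_le_sum (term_nonneg x) (mem_filter.2 ⟨mem_univ y, hxy.symm⟩)
    _ ≤ ∑ a, ∑ b with b ≠ a, W a b * (v a - v b) ^ 2 :=
        single_le_sum (f := fun a => ∑ b with b ≠ a, W a b * (v a - v b) ^ 2)
          (fun a _ => sum_nonneg (term_nonneg a)) (mem_univ x)
    _ = 2 * intV μ (gradSq μ W v) := by rw [intV_gradSq hμ]; ring

theorem abs_sub_le_sqrt_mul_sqrt_intV_gradSq (hμ : ∀ x, μ x ≠ 0)
    (hW : ∀ x y, x ≠ y → 0 ≤ W x y) (v : V → ℝ) {x y : V} (hxy : x ≠ y) (hWxy : 0 < W x y) :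
    |v x - v y| ≤ √(2 / W x y) * √(intV μ (gradSq μ W v)) := by
  rw [← Real.sqrt_mul (by positivity), div_mul_eq_mul_div]
  refine Real.abs_le_sqrt ((le_div_iff₀' hWxy).2 ?_)
  exact mul_sq_sub_le_two_mul_intV_gradSq hμ hW v hxy

theorem exists_abs_sub_le_of_adj (hμ : ∀ x, μ x ≠ 0) (hW : ∀ x y, x ≠ y → 0 ≤ W x y)
    {x y : V} (hxy : (weightGraph W).Adj x y) :
    ∃ K, ∀ v : V → ℝ, |v x - v y| ≤ K * √(intV μ (gradSq μ W v)) := by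
  obtain ⟨hne, hpos | hpos⟩ := hxy
  · exact ⟨_, fun v => abs_sub_le_sqrt_mul_sqrt_intV_gradSq hμ hW v hne hpos⟩
  · refine ⟨√(2 / W y x), fun v => ?_⟩
    rw [abs_sub_comm]
    exact abs_sub_le_sqrt_mul_sqrt_intV_gradSq hμ hW v hne.symm hpos

theorem exists_abs_sub_le_of_reachable (hμ : ∀ x, μ x ≠ 0) (hW : ∀ x y, x ≠ y → 0 ≤ W x y)
    {x y : V} (hxy : (weightGraph W).Reachable x y) :
    ∃ K, ∀ v : V → ℝ, |v x - v y| ≤ K * √(intV μ (gradSq μ W v)) := by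
  obtain ⟨walk⟩ := hxy
  induction walk with
  | nil => exact ⟨0, fun v => by simp⟩
  | @cons x z y hxz _ ih =>
    obtain ⟨K, hK⟩ := exists_abs_sub_le_of_adj hμ hW hxz
    obtain ⟨L, hL⟩ := ih
    refine ⟨K + L, fun v => ?_⟩
    rw [add_mul]
    exact (abs_sub_le (v x) (v z) (v y)).trans (add_le_add (hK v) (hL v))

theorem exists_forall_abs_sub_le_mul_sqrt_intV_gradSq (hμ : ∀ x, μ x ≠ 0)
    (hW : ∀ x y, x ≠ y → 0 ≤ W x y) (hconn : (weightGraph W).Preconnected) :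
    ∃ K, ∀ (v : V → ℝ) (x y : V), |v x - v y| ≤ K * √(intV μ (gradSq μ W v)) := by
  choose K hK using fun x y => exists_abs_sub_le_of_reachable hμ hW (hconn x y)
  obtain ⟨M, hM⟩ := (Set.finite_range fun p : V × V => K p.1 p.2).bddAbove
  refine ⟨M, fun v x y => (hK x y v).trans ?_⟩
  exact mul_le_mul_of_nonneg_right (hM ⟨(x, y), rfl⟩) (Real.sqrt_nonneg _)

theorem exists_forall_abs_le_of_intV_gradSq_le_one (hμ : ∀ x, 0 < μ x)
    (hW : ∀ x y, x ≠ y → 0 ≤ W x y) (hconn : (weightGraph W).Connected) :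
    ∃ K, ∀ v : V → ℝ, intV μ v = 0 → intV μ (gradSq μ W v) ≤ 1 → ∀ x, |v x| ≤ K := by
  have := hconn.nonempty
  obtain ⟨K, hK⟩ :=
    exists_forall_abs_sub_le_mul_sqrt_intV_gradSq (fun x => (hμ x).ne') hW hconn.preconnected
  refine ⟨|K|, fun v hmean henergy x => ?_⟩
  refine abs_le_of_intV_eq_zero (fun x => (hμ x).le) (volV_pos hμ) hmean fun y => ?_
  calc |v x - v y| ≤ K * √(intV μ (gradSq μ W v)) := hK v x y
    _ ≤ |K| * 1 := by
        gcongr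
        exacts [le_abs_self K, Real.sqrt_le_one.2 henergy]
    _ = |K| := mul_one _

end Energy

theorem weightGraph_eq_top {W : V → V → ℝ} (hW : ∀ x y, x ≠ y → 0 < W x y) :
    weightGraph W = ⊤ := by
  ext x y
  exact ⟨fun h => h.ne, fun h => ⟨h, Or.inl (hW x y h)⟩⟩

theorem moser_trudinger_general [Fintype V] [DecidableEq V] {μ : V → ℝ} {W : V → V → ℝ}
    (hμ : ∀ x, 0 < μ x) (hW : ∀ x y, x ≠ y → 0 ≤ W x y) (hconn : (weightGraph W).Connected)
    (β : ℝ) :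
    ∃ C : ℝ, 0 < C ∧ ∀ v : V → ℝ, intV μ v = 0 → intV μ (gradSq μ W v) ≤ 1 →
      intV μ (fun x => Real.exp (β * (v x) ^ 2)) ≤ C := by
  have := hconn.nonempty
  obtain ⟨K, hK⟩ := exists_forall_abs_le_of_intV_gradSq_le_one hμ hW hconn
  refine ⟨volV μ * Real.exp (|β| * K ^ 2), mul_pos (volV_pos hμ) (Real.exp_pos _),
    fun v hmean henergy => ?_⟩
  rw [← intV_const]
  refine intV_mono (fun x => (hμ x).le) fun x => Real.exp_le_exp.2 ?_
  have hsq : v x ^ 2 ≤ K ^ 2 := sq_le_sq.2 ((hK v hmean henergy x).trans (le_abs_self K))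
  exact mul_le_mul (le_abs_self β) hsq (sq_nonneg _) (abs_nonneg β)

/-- (Moser–Trudinger inequality) For every `β > 0` there is `C > 0` such that every `v` with
mean zero and `∫_V |∇v|² dμ ≤ 1` satisfies `∫_V e^{β v²} dμ ≤ C`. -/
theorem moser_trudinger [Fintype V] [Nonempty V] [DecidableEq V]
    (μ : V → ℝ) (W : V → V → ℝ)
    (hμ : ∀ x, 0 < μ x)
    (hWsym : ∀ x y, W x y = W y x)
    (hWpos : ∀ x y, x ≠ y → 0 < W x y)
    (β : ℝ) (hβ : 0 < β) :
    ∃ C : ℝ, 0 < C ∧ ∀ v : V → ℝ, intV μ v = 0 → intV μ (gradSq μ W v) ≤ 1 →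
      intV μ (fun x => Real.exp (β * (v x) ^ 2)) ≤ C := by
  have hconn : (weightGraph W).Connected := weightGraph_eq_top hWpos ▸ SimpleGraph.connected_top
  exact moser_trudinger_general hμ (fun x y hxy => (hWpos x y hxy).le) hconn β
end

section
/- (Elliptic estimate) There exists a constant C > 0, depending only on (V, μ, W), such that for every u : V → ℝ one has max_{x∈V} u(x) − min_{x∈V} u(x) ≤ C · max_{x∈V} |Lu(x)|. -/
open Real Finset

variable {V : Type*}

/-!
At a maximum point `a` of `u` every term of the sum `μ(a) Lu(a) = Σ_y W(a,y)(u(a) − u(y))` is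
nonnegative, so the sum dominates its term at a minimum point `b`. Since the weights are positive
between all pairs of distinct points, this single term already controls `u(a) − u(b)`.
-/

section MaximumPoint

variable [Fintype V] [DecidableEq V] {μ : V → ℝ} {W : V → V → ℝ} {u : V → ℝ} {a b : V}

theorem mul_opL (hμ : μ a ≠ 0) :
    μ a * opL μ W u a = ∑ y ∈ univ.filter (fun y => y ≠ a), W a y * (u a - u y) := by
  rw [opL, ← mul_assoc, mul_one_div_cancel hμ, one_mul]

theorem weight_mul_sub_nonneg_of_forall_le (hW : ∀ y, y ≠ a → 0 ≤ W a y) (hmax : ∀ y, u y ≤ u a) :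
    ∀ y ∈ univ.filter (fun y => y ≠ a), 0 ≤ W a y * (u a - u y) :=
  fun y hy => mul_nonneg (hW y (mem_filter.mp hy).2) (sub_nonneg.mpr (hmax y))

theorem opL_nonneg_of_forall_le (hμ : 0 ≤ μ a) (hW : ∀ y, y ≠ a → 0 ≤ W a y)
    (hmax : ∀ y, u y ≤ u a) : 0 ≤ opL μ W u a :=
  mul_nonneg (one_div_nonneg.mpr hμ) (sum_nonneg (weight_mul_sub_nonneg_of_forall_le hW hmax))

theorem weight_mul_sub_le_mul_opL_of_forall_le (hμ : μ a ≠ 0) (hW : ∀ y, y ≠ a → 0 ≤ W a y)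
    (hmax : ∀ y, u y ≤ u a) (hba : b ≠ a) : W a b * (u a - u b) ≤ μ a * opL μ W u a := by
  rw [mul_opL hμ]
  exact single_le_sum (weight_mul_sub_nonneg_of_forall_le hW hmax)
    (mem_filter.mpr ⟨mem_univ b, hba⟩)

theorem sub_le_mul_opL_of_forall_le {C : ℝ} (hμ : 0 < μ a) (hW : ∀ y, y ≠ a → 0 < W a y)
    (hmax : ∀ y, u y ≤ u a) (hC₀ : 0 ≤ C) (hC : ∀ y, y ≠ a → μ a / W a y ≤ C) :
    u a - u b ≤ C * opL μ W u a := by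
  have hW₀ : ∀ y, y ≠ a → 0 ≤ W a y := fun y hy => (hW y hy).le
  have hL : 0 ≤ opL μ W u a := opL_nonneg_of_forall_le hμ.le hW₀ hmax
  obtain rfl | hba := eq_or_ne b a
  · simpa only [sub_self] using mul_nonneg hC₀ hL
  calc
    u a - u b ≤ μ a * opL μ W u a / W a b :=
      (le_div_iff₀' (hW b hba)).mpr (weight_mul_sub_le_mul_opL_of_forall_le hμ.ne' hW₀ hmax hba)
    _ = μ a / W a b * opL μ W u a := mul_div_right_comm _ _ _
    _ ≤ C * opL μ W u a := mul_le_mul_of_nonneg_right (hC b hba) hL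

end MaximumPoint

theorem elliptic_estimate_general [Fintype V] [Nonempty V] [DecidableEq V]
    (μ : V → ℝ) (W : V → V → ℝ) (hμ : ∀ x, 0 < μ x) (hW : ∀ x y, x ≠ y → 0 < W x y) :
    ∃ C : ℝ, 0 < C ∧ ∀ u : V → ℝ,
      univ.sup' univ_nonempty u - univ.inf' univ_nonempty u ≤
        C * univ.sup' univ_nonempty (opL μ W u) := by
  obtain ⟨K, hK⟩ := Finite.exists_le fun p : V × V => μ p.1 / W p.1 p.2
  have hC : 0 < max K 1 := lt_max_of_lt_right one_pos
  refine ⟨max K 1, hC, fun u => ?_⟩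
  obtain ⟨a, -, ha⟩ := exists_mem_eq_sup' univ_nonempty u
  obtain ⟨b, -, hb⟩ := exists_mem_eq_inf' univ_nonempty u
  have hmax : ∀ y, u y ≤ u a := fun y => ha ▸ le_sup' u (mem_univ y)
  rw [ha, hb]
  calc
    u a - u b ≤ max K 1 * opL μ W u a :=
      sub_le_mul_opL_of_forall_le (hμ a) (fun y hy => hW a y hy.symm) hmax hC.le
        fun y _ => (hK (a, y)).trans (le_max_left K 1)
    _ ≤ max K 1 * univ.sup' univ_nonempty (opL μ W u) :=
      mul_le_mul_of_nonneg_left (le_sup' _ (mem_univ a)) hC.le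

/-- (Elliptic estimate) There exists `C > 0` such that for every `u : V → ℝ`,
`max u − min u ≤ C · max |Lu|`. -/
theorem elliptic_estimate [Fintype V] [Nonempty V] [DecidableEq V]
    (μ : V → ℝ) (W : V → V → ℝ)
    (hμ : ∀ x, 0 < μ x)
    (hWsym : ∀ x y, W x y = W y x)
    (hWpos : ∀ x y, x ≠ y → 0 < W x y) :
    ∃ C : ℝ, 0 < C ∧ ∀ u : V → ℝ,
      univ.sup' univ_nonempty u - univ.inf' univ_nonempty u ≤
        C * univ.sup' univ_nonempty (fun x => |opL μ W u x|) := by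
  obtain ⟨C, hC, hosc⟩ := elliptic_estimate_general μ W hμ hWpos
  exact ⟨C, hC, fun u => (hosc u).trans <|
    mul_le_mul_of_nonneg_left (sup'_mono_fun fun _ _ => le_abs_self _) hC.le⟩
end

section
/- (Short time existence for the first flow) Let ρ > 0 and let h : V → ℝ satisfy max_{x∈V} h(x) > 0. For any initial function u₀ : V → ℝ with ∫_V h e^{u₀} dμ ≠ 0, there exist T₀ > 0 and a unique function u : V × [0, T₀] → ℝ, differentiable in t, with ∫_V h e^{u(·,t)} dμ ≠ 0 for all t ∈ [0, T₀], such that ∂_t e^{u(x,t)} = −Lu(x,t) + ρ( h(x)e^{u(x,t)} / ∫_V h e^{u(·,t)} dμ − 1/|V| ) for all (x,t) ∈ V × [0, T₀] and u(x,0) = u₀(x) for all x ∈ V. -/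
open Real Finset

variable {V : Type*}

/-!
Dividing by `e^u > 0` turns the flow `∂ₜ e^u = G(u)` into the ordinary differential equation
`u' = e^{-u} G(u)` on `V → ℝ`. For the first flow, `G` is smooth on the open set of functions `w`
with `∫_V h e^w dμ ≠ 0`, so Picard–Lindelöf gives a solution through `u₀`, which stays in this set
for a short time by continuity. Two solutions on a compact time interval have compact ranges in
that set; the right-hand side is Lipschitz on their union, and Grönwall's inequality makes them
equal.
-/

section AutonomousODE

variable {E : Type*} [NormedAddCommGroup E] [NormedSpace ℝ E] {F : E → E} {Ω : Set E}

lemma locallyLipschitzOn_of_forall_contDiffAt {E' : Type*} [NormedAddCommGroup E']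
    [NormedSpace ℝ E'] {f : E → E'} (hf : ∀ x ∈ Ω, ContDiffAt ℝ 1 f x) :
    LocallyLipschitzOn Ω f := fun x hx =>
  let ⟨K, s, hs, hK⟩ := (hf x hx).exists_lipschitzOnWith
  ⟨K, s, mem_nhdsWithin_of_mem_nhds hs, hK⟩

lemma eqOn_Icc_of_isIntegralCurveOn {u v : ℝ → E} {a b : ℝ} (hF : LocallyLipschitzOn Ω F)
    (hu : IsIntegralCurveOn u (fun _ => F) (Set.Icc a b)) (huΩ : Set.MapsTo u (Set.Icc a b) Ω)
    (hv : IsIntegralCurveOn v (fun _ => F) (Set.Icc a b)) (hvΩ : Set.MapsTo v (Set.Icc a b) Ω)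
    (huv : u a = v a) : Set.EqOn u v (Set.Icc a b) := by
  let S := u '' Set.Icc a b ∪ v '' Set.Icc a b
  have hS : IsCompact S :=
    (isCompact_Icc.image_of_continuousOn hu.continuousOn).union
      (isCompact_Icc.image_of_continuousOn hv.continuousOn)
  have hSΩ : S ⊆ Ω := Set.union_subset huΩ.image_subset hvΩ.image_subset
  obtain ⟨K, hK⟩ := (hF.mono hSΩ).exists_lipschitzOnWith_of_compact hS
  have right_deriv {w : ℝ → E} (hw : IsIntegralCurveOn w (fun _ => F) (Set.Icc a b)) :
      ∀ t ∈ Set.Ico a b, HasDerivWithinAt w (F (w t)) (Set.Ici t) t := fun t ht =>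
    (hw t (Set.Ico_subset_Icc_self ht)).mono_of_mem_nhdsWithin (Icc_mem_nhdsGE_of_mem ht)
  exact ODE_solution_unique_of_mem_Icc_right (v := fun _ => F) (s := fun _ => S)
    (fun _ _ => hK)
    hu.continuousOn (right_deriv hu)
    (fun t ht => .inl (Set.mem_image_of_mem u (Set.Ico_subset_Icc_self ht)))
    hv.continuousOn (right_deriv hv)
    (fun t ht => .inr (Set.mem_image_of_mem v (Set.Ico_subset_Icc_self ht))) huv

lemma exists_hasDerivAt_mem_of_contDiffAt [CompleteSpace E] {x₀ : E} (hF : ContDiffAt ℝ 1 F x₀)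
    (hΩ : Ω ∈ nhds x₀) (t₀ : ℝ) :
    ∃ T > 0, ∃ u : ℝ → E, u t₀ = x₀ ∧
      ∀ t ∈ Set.Icc t₀ (t₀ + T), u t ∈ Ω ∧ HasDerivAt u (F (u t)) t := by
  obtain ⟨u, hu₀, ε, hε, hu⟩ :=
    hF.exists_forall_mem_closedBall_exists_eq_forall_mem_Ioo_hasDerivAt₀ t₀
  have t₀_mem : t₀ ∈ Set.Ioo (t₀ - ε) (t₀ + ε) := by constructor <;> linarith
  have u_mem : ∀ᶠ t in nhds t₀, u t ∈ Ω :=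
    (hu t₀ t₀_mem).continuousAt.eventually_mem (hu₀.symm ▸ hΩ)
  have good : ∀ᶠ t in nhds t₀, u t ∈ Ω ∧ HasDerivAt u (F (u t)) t :=
    u_mem.and (Filter.eventually_of_mem (isOpen_Ioo.mem_nhds t₀_mem) hu)
  obtain ⟨T, hT, hball⟩ := Metric.nhds_basis_closedBall.eventually_iff.mp good
  refine ⟨T, hT, u, hu₀, fun t ht => hball ?_⟩
  rw [Real.closedBall_eq_Icc]
  exact Set.Icc_subset_Icc_left (by linarith) ht

end AutonomousODE

section ExponentialFlow

lemma hasDerivWithinAt_exp_iff {f : ℝ → ℝ} {f' t : ℝ} {s : Set ℝ} :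
    HasDerivWithinAt (fun τ => Real.exp (f τ)) f' s t ↔
      HasDerivWithinAt f (Real.exp (-f t) * f') s t := by
  refine ⟨fun hf => ?_, fun hf => ?_⟩
  · simpa only [Real.log_exp, Real.exp_neg, div_eq_inv_mul] using hf.log (Real.exp_ne_zero _)
  · simpa only [← mul_assoc, ← Real.exp_add, add_neg_cancel, Real.exp_zero, one_mul] using hf.exp

variable {ι : Type*} {G : (ι → ℝ) → ι → ℝ}

/-- The vector field `w ↦ e^{-w} G(w)` driving `u` when `e^u` evolves by `∂ₜ e^u = G(u)`. -/
noncomputable def logField (G : (ι → ℝ) → ι → ℝ) (w : ι → ℝ) (x : ι) : ℝ :=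
  Real.exp (-w x) * G w x

lemma hasDerivWithinAt_logField_iff {u : ℝ → ι → ℝ} {s : Set ℝ} {t : ℝ} :
    HasDerivWithinAt u (logField G (u t)) s t ↔
      ∀ x, HasDerivWithinAt (fun τ => Real.exp (u τ x)) (G (u t) x) s t := by
  simp only [hasDerivWithinAt_pi, hasDerivWithinAt_exp_iff, logField]

variable [Fintype ι]

lemma contDiffAt_logField {n : WithTop ℕ∞} {w : ι → ℝ} (hG : ContDiffAt ℝ n G w) :
    ContDiffAt ℝ n (logField G) w :=
  contDiffAt_pi.mpr fun x => ContDiffAt.mul (by fun_prop) (contDiffAt_pi.mp hG x)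

theorem exp_flow_short_time {Ω : Set (ι → ℝ)} {u₀ : ι → ℝ} (hΩ : Ω ∈ nhds u₀)
    (hG : ∀ w ∈ Ω, ContDiffAt ℝ 1 G w) :
    ∃ T > 0, ∃ u : ℝ → ι → ℝ, u 0 = u₀ ∧ (∀ t ∈ Set.Icc 0 T, u t ∈ Ω) ∧
      (∀ x, ∀ t ∈ Set.Icc 0 T, HasDerivAt (fun τ => Real.exp (u τ x)) (G (u t) x) t) ∧
      ∀ v : ℝ → ι → ℝ, v 0 = u₀ → (∀ t ∈ Set.Icc 0 T, v t ∈ Ω) →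
        (∀ x, ∀ t ∈ Set.Icc 0 T,
          HasDerivWithinAt (fun τ => Real.exp (v τ x)) (G (v t) x) (Set.Icc 0 T) t) →
        ∀ t ∈ Set.Icc 0 T, v t = u t := by
  have hF : ∀ w ∈ Ω, ContDiffAt ℝ 1 (logField G) w := fun w hw => contDiffAt_logField (hG w hw)
  obtain ⟨T, hT, u, hu₀, hu⟩ :=
    exists_hasDerivAt_mem_of_contDiffAt (hF u₀ (mem_of_mem_nhds hΩ)) hΩ 0
  rw [zero_add] at hu
  refine ⟨T, hT, u, hu₀, fun t ht => (hu t ht).1, fun x t ht => ?_, fun v hv₀ hvΩ hv => ?_⟩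
  · exact (hasDerivWithinAt_logField_iff.mp (hu t ht).2.hasDerivWithinAt x).hasDerivAt
      Filter.univ_mem
  · exact eqOn_Icc_of_isIntegralCurveOn (locallyLipschitzOn_of_forall_contDiffAt hF)
      (fun t ht => hasDerivWithinAt_logField_iff.mpr fun x => hv x t ht) hvΩ
      (fun t ht => (hu t ht).2.hasDerivWithinAt) (fun t ht => (hu t ht).1)
      (hv₀.trans hu₀.symm)

end ExponentialFlow

section FirstFlow

variable [Fintype V]

lemma contDiff_intV_mul_exp (μ h : V → ℝ) {n : WithTop ℕ∞} :
    ContDiff ℝ n fun w : V → ℝ => intV μ fun y => h y * Real.exp (w y) := by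
  unfold intV
  fun_prop

variable [DecidableEq V]

lemma contDiff_opL (μ : V → ℝ) (W : V → V → ℝ) {n : WithTop ℕ∞} : ContDiff ℝ n (opL μ W) := by
  unfold opL
  fun_prop

/-- The right-hand side `-Lw + ρ (h e^w / ∫_V h e^w dμ - 1/|V|)` of the first flow. -/
noncomputable def firstFlowRate (μ : V → ℝ) (W : V → V → ℝ) (ρ : ℝ) (h w : V → ℝ) (x : V) : ℝ :=
  -(opL μ W w x) +
    ρ * (h x * Real.exp (w x) / intV μ (fun y => h y * Real.exp (w y)) - 1 / volV μ)

lemma contDiffAt_firstFlowRate (μ : V → ℝ) (W : V → V → ℝ) (ρ : ℝ) {h w : V → ℝ}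
    {n : WithTop ℕ∞} (hw : intV μ (fun y => h y * Real.exp (w y)) ≠ 0) :
    ContDiffAt ℝ n (firstFlowRate μ W ρ h) w := by
  refine contDiffAt_pi.mpr fun x => ?_
  have reaction : ContDiffAt ℝ n
      (fun w : V → ℝ => h x * Real.exp (w x) / intV μ fun y => h y * Real.exp (w y)) w :=
    ContDiffAt.div (by fun_prop) (contDiff_intV_mul_exp μ h).contDiffAt hw
  exact (contDiff_pi.mp (contDiff_opL μ W) x).contDiffAt.neg.add
    (contDiffAt_const.mul (reaction.sub contDiffAt_const))

theorem first_flow_short_time_general (μ : V → ℝ) (W : V → V → ℝ)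
    (hμ : ∀ x, μ x ≠ 0) (hvol : volV μ ≠ 0) (ρ : ℝ) (h u₀ : V → ℝ)
    (hu₀ : intV μ (fun x => h x * Real.exp (u₀ x)) ≠ 0) :
    ∃ T₀ > 0, ∃ u : ℝ → V → ℝ, u 0 = u₀ ∧
      (∀ t ∈ Set.Icc 0 T₀, intV μ (fun y => h y * Real.exp (u t y)) ≠ 0) ∧
      (∀ x, ∀ t ∈ Set.Icc 0 T₀,
        HasDerivAt (fun s => Real.exp (u s x)) (firstFlowRate μ W ρ h (u t) x) t) ∧
      ∀ v : ℝ → V → ℝ, v 0 = u₀ →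
        (∀ t ∈ Set.Icc 0 T₀, intV μ (fun y => h y * Real.exp (v t y)) ≠ 0) →
        (∀ x, ∀ t ∈ Set.Icc 0 T₀,
          HasDerivWithinAt (fun s => Real.exp (v s x)) (firstFlowRate μ W ρ h (v t) x)
            (Set.Icc 0 T₀) t) →
        ∀ t ∈ Set.Icc 0 T₀, v t = u t :=
  exp_flow_short_time
    (Ω := {w | intV μ (fun y => h y * Real.exp (w y)) ≠ 0})
    ((contDiff_intV_mul_exp μ h (n := 0)).continuous.continuousAt.eventually_ne hu₀)
    fun _ hw => contDiffAt_firstFlowRate μ W ρ hw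

end FirstFlow

/-- (Short time existence for the first flow) For `ρ > 0`, `max h > 0` and initial datum `u₀`
with `∫_V h e^{u₀} dμ ≠ 0`, the first mean field flow has a unique solution on some
time interval `[0, T₀]`. -/
theorem first_flow_short_time [Fintype V] [Nonempty V] [DecidableEq V]
    (μ : V → ℝ) (W : V → V → ℝ)
    (hμ : ∀ x, 0 < μ x)
    (hWsym : ∀ x y, W x y = W y x)
    (hWpos : ∀ x y, x ≠ y → 0 < W x y)
    (ρ : ℝ) (hρ : 0 < ρ)
    (h : V → ℝ) (hmax : ∃ x, 0 < h x)
    (u₀ : V → ℝ) (hu₀ : intV μ (fun x => h x * Real.exp (u₀ x)) ≠ 0) :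
    ∃ T₀ : ℝ, 0 < T₀ ∧ ∃ u : ℝ → V → ℝ,
      (u 0 = u₀) ∧
      (∀ t ∈ Set.Icc (0 : ℝ) T₀, intV μ (fun y => h y * Real.exp (u t y)) ≠ 0) ∧
      (∀ x, ∀ t ∈ Set.Icc (0 : ℝ) T₀,
        HasDerivAt (fun s => Real.exp (u s x))
          (-(opL μ W (u t) x) +
            ρ * (h x * Real.exp (u t x) / intV μ (fun y => h y * Real.exp (u t y)) - 1 / volV μ))
          t) ∧
      (∀ v : ℝ → V → ℝ, v 0 = u₀ →
        (∀ t ∈ Set.Icc (0 : ℝ) T₀, intV μ (fun y => h y * Real.exp (v t y)) ≠ 0) →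
        (∀ x, ∀ t ∈ Set.Icc (0 : ℝ) T₀,
          HasDerivAt (fun s => Real.exp (v s x))
            (-(opL μ W (v t) x) +
              ρ * (h x * Real.exp (v t x) / intV μ (fun y => h y * Real.exp (v t y)) - 1 / volV μ))
            t) →
        ∀ t ∈ Set.Icc (0 : ℝ) T₀, v t = u t) := by
  obtain ⟨T₀, hT₀, u, hu_zero, hu_ne, hu, huniq⟩ :=
    first_flow_short_time_general μ W (fun x => (hμ x).ne')
      (sum_pos (fun x _ => hμ x) univ_nonempty).ne' ρ h u₀ hu₀
  exact ⟨T₀, hT₀, u, hu_zero, hu_ne, hu, fun v hv_zero hv_ne hv =>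
    huniq v hv_zero hv_ne fun x t ht => (hv x t ht).hasDerivWithinAt⟩
end

section
/- (Invariance and monotonicity along the first flow) Let ρ > 0, let h : V → ℝ satisfy max_{x∈V} h(x) > 0, and let u : V × [0,T) → ℝ be a solution of the first mean field flow ∂_t e^{u} = −Lu + ρ( h e^{u} / ∫_V h e^{u} dμ − 1/|V| ) with u(·,0) = u₀ and ∫_V h e^{u(·,t)} dμ ≠ 0 for all t ∈ [0,T). Then: (i) ∫_V e^{u(·,t)} dμ = ∫_V e^{u₀} dμ for all t ∈ [0,T); (ii) for all 0 ≤ t₁ < t₂ < T one has J_{ρ,h}(u(·,t₂)) ≤ J_{ρ,h}(u(·,t₁)). -/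
open Real Finset

variable {V : Type*}

/-- The mean field flow functional
`J_{ρ,h}(u) = (1/2)∫_V |∇u|² dμ − ρ log|∫_V h e^u dμ| + (ρ/|V|) ∫_V u dμ`. -/
noncomputable def Jrhoh [Fintype V] [DecidableEq V] (μ : V → ℝ) (W : V → V → ℝ)
    (h : V → ℝ) (ρ : ℝ) (u : V → ℝ) : ℝ :=
  (1 / 2) * intV μ (gradSq μ W u) - ρ * Real.log |intV μ (fun x => h x * Real.exp (u x))| +
    (ρ / volV μ) * intV μ u

/- Green's formula `∫ ∇u·∇v = ∫ Lu · v` shows that the right-hand side `F` of the flow is minus the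
`L²(μ)`-gradient of `J`. Testing `F` against `1` gives conservation of `∫ e^u`; since
`F = ∂ₜ e^u = e^u ∂ₜu`, testing it against `∂ₜu` gives `d/dt J(u) = -∫ F ∂ₜu = -∫ e^{-u} F² ≤ 0`. -/

section Green

variable [Fintype V] [DecidableEq V] {μ : V → ℝ} {W : V → V → ℝ}

lemma mul_opL_s12 {x : V} (hx : μ x ≠ 0) (u : V → ℝ) :
    μ x * opL μ W u x = ∑ y, W x y * (u x - u y) := by
  rw [opL, ← mul_assoc, mul_one_div_cancel hx, one_mul]
  refine sum_filter_of_ne fun y _ hy hyx => hy ?_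
  rw [hyx, sub_self, mul_zero]

lemma mul_gradForm {x : V} (hx : μ x ≠ 0) (u v : V → ℝ) :
    μ x * gradForm μ W u v x = 1 / 2 * ∑ y, W x y * (u x - u y) * (v x - v y) := by
  have hsum : ∑ y ∈ univ.filter (fun y => y ≠ x), W x y * (u x - u y) * (v x - v y) =
      ∑ y, W x y * (u x - u y) * (v x - v y) := by
    refine sum_filter_of_ne fun y _ hy hyx => hy ?_
    rw [hyx, sub_self (v x), mul_zero]
  rw [gradForm, hsum]
  field_simp

lemma intV_gradForm (hμ : ∀ x, μ x ≠ 0) (hW : ∀ x y, W x y = W y x) (u v : V → ℝ) :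
    intV μ (gradForm μ W u v) = intV μ (fun x => opL μ W u x * v x) := by
  have hswap : ∑ x, ∑ y, W x y * (u x - u y) * v y = -∑ x, ∑ y, W x y * (u x - u y) * v x := by
    rw [sum_comm]
    simp only [← sum_neg_distrib]
    refine sum_congr rfl fun x _ => sum_congr rfl fun y _ => ?_
    rw [hW y x]
    ring
  simp only [intV, mul_gradForm (hμ _), ← mul_assoc, mul_opL_s12 (hμ _), ← mul_sum, sum_mul,
    mul_sub _ (v _) (v _), sum_sub_distrib]
  linarith

lemma intV_opL (hμ : ∀ x, μ x ≠ 0) (hW : ∀ x y, W x y = W y x) (u : V → ℝ) :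
    intV μ (opL μ W u) = 0 := by
  simpa [intV, gradForm] using (intV_gradForm hμ hW u (fun _ => 1)).symm

end Green

section FirstVariation

variable [Fintype V] {μ : V → ℝ} {S : Set ℝ} {t : ℝ}

lemma hasDerivWithinAt_intV {f : ℝ → V → ℝ} {f' : V → ℝ}
    (hf : ∀ x, HasDerivWithinAt (fun s => f s x) (f' x) S t) :
    HasDerivWithinAt (fun s => intV μ (f s)) (intV μ f') S t :=
  HasDerivWithinAt.fun_sum fun x _ => (hf x).const_mul (μ x)

variable [DecidableEq V] {W : V → V → ℝ} {h : V → ℝ} {ρ : ℝ}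

/-- The right-hand side of the first mean field flow `∂ₜ e^u = F(u)`, as a function of the current
state `u`. The flow is then the predicate that `e^u` has time derivative `F(u)` at every vertex. -/
noncomputable def firstFlowVelocity (μ : V → ℝ) (W : V → V → ℝ) (h : V → ℝ) (ρ : ℝ)
    (u : V → ℝ) (x : V) : ℝ :=
  -(opL μ W u x) + ρ * (h x * exp (u x) / intV μ (fun y => h y * exp (u y)) - 1 / volV μ)

lemma intV_firstFlowVelocity_mul (u v : V → ℝ) :
    intV μ (fun x => firstFlowVelocity μ W h ρ u x * v x) =
      -intV μ (fun x => opL μ W u x * v x) +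
        ρ * (intV μ (fun x => h x * exp (u x) * v x) / intV μ (fun x => h x * exp (u x))) -
        ρ / volV μ * intV μ v := by
  simp only [intV, firstFlowVelocity, sum_div, mul_sum, ← sum_neg_distrib, ← sum_add_distrib,
    ← sum_sub_distrib]
  exact sum_congr rfl fun x _ => by ring

lemma intV_firstFlowVelocity (hμ : ∀ x, 0 < μ x) (hW : ∀ x y, W x y = W y x) {u : V → ℝ}
    (hu : intV μ (fun x => h x * exp (u x)) ≠ 0) :
    intV μ (firstFlowVelocity μ W h ρ u) = 0 := by
  have hvol : volV μ ≠ 0 := (sum_pos (fun x _ => hμ x) (nonempty_of_sum_ne_zero hu)).ne'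
  have hone : intV μ (fun _ => 1) = volV μ := by simp only [intV, volV, mul_one]
  have htest := intV_firstFlowVelocity_mul (μ := μ) (W := W) (h := h) (ρ := ρ) u (fun _ => 1)
  simp only [mul_one] at htest
  rw [htest, intV_opL (fun x => (hμ x).ne') hW, hone, div_self hu, div_mul_cancel₀ _ hvol]
  ring

variable {u : ℝ → V → ℝ}

lemma hasDerivWithinAt_gradSq {u' : V → ℝ}
    (hu : ∀ x, HasDerivWithinAt (fun s => u s x) (u' x) S t) (x : V) :
    HasDerivWithinAt (fun s => gradSq μ W (u s) x) (2 * gradForm μ W (u t) u' x) S t := by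
  have hterm (y : V) : HasDerivWithinAt (fun s => W x y * (u s x - u s y) * (u s x - u s y))
      (2 * (W x y * (u t x - u t y) * (u' x - u' y))) S t :=
    ((((hu x).fun_sub (hu y)).const_mul (W x y)).fun_mul ((hu x).fun_sub (hu y))).congr_deriv
      (by ring)
  refine ((HasDerivWithinAt.fun_sum fun y _ => hterm y).const_mul (1 / (2 * μ x))).congr_deriv ?_
  rw [gradForm, ← mul_sum, mul_left_comm]

lemma hasDerivWithinAt_Jrhoh (hμ : ∀ x, μ x ≠ 0) (hW : ∀ x y, W x y = W y x) {u' : V → ℝ}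
    (hu : ∀ x, HasDerivWithinAt (fun s => u s x) (u' x) S t)
    (hne : intV μ (fun x => h x * exp (u t x)) ≠ 0) :
    HasDerivWithinAt (fun s => Jrhoh μ W h ρ (u s))
      (-intV μ (fun x => firstFlowVelocity μ W h ρ (u t) x * u' x)) S t := by
  have hgrad : HasDerivWithinAt (fun s => intV μ (gradSq μ W (u s)))
      (2 * intV μ (fun x => opL μ W (u t) x * u' x)) S t := by
    refine (hasDerivWithinAt_intV (hasDerivWithinAt_gradSq hu)).congr_deriv ?_
    rw [← intV_gradForm hμ hW]
    simp only [intV, mul_sum, mul_left_comm]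
  have hexp : HasDerivWithinAt (fun s => intV μ (fun x => h x * exp (u s x)))
      (intV μ (fun x => h x * exp (u t x) * u' x)) S t :=
    hasDerivWithinAt_intV fun x =>
      ((hu x).exp.const_mul (h x)).congr_deriv (mul_assoc _ _ _).symm
  simp only [Jrhoh, log_abs]
  refine (((hgrad.const_mul (1 / 2)).fun_sub ((hexp.log hne).const_mul ρ)).fun_add
    ((hasDerivWithinAt_intV hu).const_mul (ρ / volV μ))).congr_deriv ?_
  rw [intV_firstFlowVelocity_mul]
  ring

lemma hasDerivWithinAt_Jrhoh_of_firstFlow (hμ : ∀ x, μ x ≠ 0) (hW : ∀ x y, W x y = W y x)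
    (hne : intV μ (fun x => h x * exp (u t x)) ≠ 0)
    (hflow : ∀ x, HasDerivWithinAt (fun s => exp (u s x))
      (firstFlowVelocity μ W h ρ (u t) x) S t) :
    HasDerivWithinAt (fun s => Jrhoh μ W h ρ (u s))
      (-intV μ (fun x => firstFlowVelocity μ W h ρ (u t) x ^ 2 / exp (u t x))) S t := by
  have hu (x : V) : HasDerivWithinAt (fun s => u s x)
      (firstFlowVelocity μ W h ρ (u t) x / exp (u t x)) S t := by
    simpa only [log_exp] using (hflow x).log (exp_ne_zero _)
  simpa only [sq, mul_div_assoc] using hasDerivWithinAt_Jrhoh hμ hW hu hne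

end FirstVariation

theorem first_flow_invariant_monotone_general [Fintype V] [DecidableEq V]
    {μ : V → ℝ} {W : V → V → ℝ} (hμ : ∀ x, 0 < μ x) (hW : ∀ x y, W x y = W y x)
    {ρ : ℝ} {h : V → ℝ} {S : Set ℝ} (hS : Convex ℝ S) {u : ℝ → V → ℝ}
    (hne : ∀ t ∈ S, intV μ (fun x => h x * exp (u t x)) ≠ 0)
    (hflow : ∀ x, ∀ t ∈ S, HasDerivWithinAt (fun s => exp (u s x))
      (firstFlowVelocity μ W h ρ (u t) x) S t) :
    (∀ t₁ ∈ S, ∀ t₂ ∈ S,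
      intV μ (fun x => exp (u t₁ x)) = intV μ (fun x => exp (u t₂ x))) ∧
    AntitoneOn (fun t => Jrhoh μ W h ρ (u t)) S := by
  constructor
  · have hmass (t : ℝ) (ht : t ∈ S) :
        HasDerivWithinAt (fun s => intV μ (fun x => exp (u s x))) 0 S t :=
      (hasDerivWithinAt_intV fun x => hflow x t ht).congr_deriv
        (intV_firstFlowVelocity hμ hW (hne t ht))
    intro t₁ h₁ t₂ h₂
    have hdist := hS.norm_image_sub_le_of_norm_hasDerivWithin_le hmass
      (fun _ _ => norm_zero.le) h₂ h₁
    rwa [zero_mul, norm_le_zero_iff, sub_eq_zero] at hdist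
  · have hJ (t : ℝ) (ht : t ∈ S) := hasDerivWithinAt_Jrhoh_of_firstFlow
      (fun x => (hμ x).ne') hW (hne t ht) (fun x => hflow x t ht)
    refine antitoneOn_of_hasDerivWithinAt_nonpos hS (fun t ht => (hJ t ht).continuousWithinAt)
      (fun t ht => (hJ t (interior_subset ht)).mono interior_subset) fun t _ => ?_
    exact neg_nonpos.mpr <| sum_nonneg fun x _ =>
      mul_nonneg (hμ x).le (div_nonneg (sq_nonneg _) (exp_nonneg _))

/-- (Invariance and monotonicity along the first flow) Along any solution of the first mean
field flow on `[0,T)`: (i) `∫_V e^{u(·,t)} dμ` is conserved; (ii) `J_{ρ,h}(u(·,t))` is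
non-increasing. -/
theorem first_flow_invariant_monotone [Fintype V] [Nonempty V] [DecidableEq V]
    (μ : V → ℝ) (W : V → V → ℝ)
    (hμ : ∀ x, 0 < μ x)
    (hWsym : ∀ x y, W x y = W y x)
    (hWpos : ∀ x y, x ≠ y → 0 < W x y)
    (ρ : ℝ) (hρ : 0 < ρ)
    (h : V → ℝ) (hmax : ∃ x, 0 < h x)
    (T : ℝ) (u : ℝ → V → ℝ) (u₀ : V → ℝ) (hinit : u 0 = u₀)
    (hne : ∀ t ∈ Set.Ico (0 : ℝ) T, intV μ (fun y => h y * Real.exp (u t y)) ≠ 0)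
    (hflow : ∀ x, ∀ t ∈ Set.Ico (0 : ℝ) T,
      HasDerivAt (fun s => Real.exp (u s x))
        (-(opL μ W (u t) x) +
          ρ * (h x * Real.exp (u t x) / intV μ (fun y => h y * Real.exp (u t y)) - 1 / volV μ))
        t) :
    (∀ t ∈ Set.Ico (0 : ℝ) T,
      intV μ (fun x => Real.exp (u t x)) = intV μ (fun x => Real.exp (u₀ x))) ∧
    (∀ t₁ t₂ : ℝ, 0 ≤ t₁ → t₁ < t₂ → t₂ < T →
      Jrhoh μ W h ρ (u t₂) ≤ Jrhoh μ W h ρ (u t₁)) := by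
  obtain ⟨hmass, hanti⟩ := first_flow_invariant_monotone_general hμ hWsym (convex_Ico 0 T) hne
    fun x t ht => (hflow x t ht).hasDerivWithinAt
  subst hinit
  exact ⟨fun t ht => hmass t ht 0 ⟨le_rfl, ht.1.trans_lt ht.2⟩, fun t₁ t₂ h₀ h₁₂ h₂ =>
    hanti ⟨h₀, h₁₂.trans h₂⟩ ⟨h₀.trans h₁₂.le, h₂⟩ h₁₂.le⟩
end
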